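/- Let α ≥ 1, β ≥ 1 and N ≥ 2 be integers with gcd(β, N) = 1. In R = ℂ[[x_1,x_2,y_1,y_2]] let I_Δ be the ideal generated by x_1 − y_1, x_1^α x_2^β − y_1^α y_2^β and x_2^N − y_2^N. Let T^s = { m·min(N,β) : m ∈ ℕ } ∪ { n ∈ ℕ : n ≥ max(N,β) }. Then for every (a,b) ∈ ℕ², the element x_1^a x_2^b − y_1^a y_2^b is integral over I_Δ if and only if N divides b, or (a ≥ α and b ∈ T^s). -/

import Mathlib

/-- An element `f` of a commutative ring is *integral over the ideal* `I` if it satisfies an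
equation `f ^ m + a 1 * f ^ (m-1) + ⋯ + a (m-1) * f + a m = 0` with `a j ∈ I ^ j`. -/
def IsIntegralOverIdeal {R : Type*} [CommRing R] (I : Ideal R) (f : R) : Prop :=
  ∃ m : ℕ, 0 < m ∧ ∃ a : ℕ → R, (∀ j, 1 ≤ j → j ≤ m → a j ∈ I ^ j) ∧
    f ^ m + ∑ j ∈ Finset.Icc 1 m, a j * f ^ (m - j) = 0

/-- Determinant trick. -/
theorem integral_of_mul_le {R : Type*} [CommRing R] [IsDomain R] (I K : Ideal R) (f : R)
    (hfg : K.FG) (hK : K ≠ ⊥) (h : ∀ w ∈ K, f * w ∈ I * K) : IsIntegralOverIdeal I f := by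
  have : Module.Finite R K := Module.Finite.iff_fg.mpr hfg
  have hr : LinearMap.range (f • (LinearMap.id : K →ₗ[R] K)) ≤ I • (⊤ : Submodule R K) := by
    rintro _ ⟨w, rfl⟩
    have h1 : K.subtype (f • w) ∈ Submodule.map K.subtype (I • (⊤ : Submodule R K)) := by
      rw [Submodule.map_smul'', Submodule.map_top, Submodule.range_subtype]
      simpa using h w w.2
    obtain ⟨z, hz, hzw⟩ := h1
    have : z = f • w := Subtype.ext hzw
    simpa [this] using hz
  obtain ⟨p, hm, -, hc, hp⟩ :=
    LinearMap.exists_monic_and_natDegree_eq_and_coeff_mem_pow_and_aeval_eq_zero R _ I hr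
  obtain ⟨w, hw, hw0⟩ := Submodule.exists_mem_ne_zero_of_ne_bot hK
  have hpow : ∀ n : ℕ, ((f • (LinearMap.id : K →ₗ[R] K)) ^ n) ⟨w, hw⟩ = f ^ n • ⟨w, hw⟩ := by
    intro n
    induction n with
    | zero => simp
    | succ n ih => rw [pow_succ', Module.End.mul_apply, ih]; simp [pow_succ', mul_smul]
  have he : p.eval f = 0 := by
    have h2 := congrArg (fun g : K →ₗ[R] K => ((g ⟨w, hw⟩ : K) : R)) hp
    simp only [Polynomial.aeval_eq_sum_range, LinearMap.sum_apply, LinearMap.smul_apply, hpow,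
      LinearMap.zero_apply] at h2
    simp only [Submodule.coe_sum, Submodule.coe_smul, smul_eq_mul, Submodule.coe_zero] at h2
    have h3 : p.eval f * w = 0 := by
      rw [Polynomial.eval_eq_sum_range, Finset.sum_mul, ← h2]
      exact Finset.sum_congr rfl fun _ _ => by ring
    exact (mul_eq_zero.mp h3).resolve_right hw0
  have hd : 0 < p.natDegree := by
    rcases Nat.eq_zero_or_pos p.natDegree with h0 | h0
    · rw [hm.natDegree_eq_zero.mp h0] at he
      simp at he
    · exact h0
  refine ⟨p.natDegree, hd, fun j => p.coeff (p.natDegree - j), ?_, ?_⟩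
  · intro j h1 h2
    have := hc (p.natDegree - j)
    rwa [Nat.sub_sub_self h2] at this
  · rw [Polynomial.eval_eq_sum_range, Finset.sum_range_succ, hm.coeff_natDegree, one_mul] at he
    rw [← he, add_comm]
    congr 1
    refine Finset.sum_bij' (fun j _ => p.natDegree - j) (fun j _ => p.natDegree - j) ?_ ?_ ?_ ?_ ?_
    all_goals simp
    all_goals omega

open scoped Pointwise in
theorem pow_le_of_monomials {R : Type*} [CommRing R] (u v : R) (n : ℕ) (J : Ideal R)
    (h : ∀ i j, i + j = n → u ^ i * v ^ j ∈ J) : (Ideal.span {u, v}) ^ n ≤ J := by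
  have key : ∀ n : ℕ, ∀ z ∈ ({u, v} : Set R) ^ n, ∃ i j, i + j = n ∧ z = u ^ i * v ^ j := by
    intro n
    induction n with
    | zero => intro z hz; exact ⟨0, 0, rfl, by simpa using hz⟩
    | succ n ih =>
      intro z hz
      rw [pow_succ] at hz
      obtain ⟨x, hx, y, hy, rfl⟩ := Set.mem_mul.mp hz
      obtain ⟨i, j, hij, rfl⟩ := ih x hx
      rcases hy with rfl | rfl
      · exact ⟨i + 1, j, by omega, by ring⟩
      · exact ⟨i, j + 1, by omega, by ring⟩
  rw [Ideal.span, Submodule.span_pow, Submodule.span_le]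
  intro z hz
  obtain ⟨i, j, hij, rfl⟩ := key n z hz
  exact h i j hij

theorem monomial_mem {R : Type*} [CommRing R] (u v : R) (i j n : ℕ) (h : i + j = n) :
    u ^ i * v ^ j ∈ (Ideal.span {u, v}) ^ n := by
  rw [← h, pow_add]
  exact Ideal.mul_mem_mul (Ideal.pow_mem_pow (Ideal.subset_span (by simp)) _)
    (Ideal.pow_mem_pow (Ideal.subset_span (by simp)) _)

/-- The quotient `(u^n - v^n)/(u - v)`. -/
def geomU {R : Type*} [CommRing R] (u v : R) (n : ℕ) : R :=
  ∑ i ∈ Finset.range n, u ^ i * v ^ (n - 1 - i)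

theorem geomU_mul {R : Type*} [CommRing R] (u v : R) (n : ℕ) :
    geomU u v n * (u - v) = u ^ n - v ^ n := (Commute.all u v).geom_sum₂_mul n

theorem geomU_mem {R : Type*} [CommRing R] (u v : R) (n : ℕ) :
    geomU u v n ∈ (Ideal.span {u, v}) ^ (n - 1) := by
  refine Ideal.sum_mem _ fun i hi => monomial_mem u v _ _ _ ?_
  have := Finset.mem_range.mp hi
  omega

theorem geomU_add {R : Type*} [CommRing R] [IsDomain R] (u v : R) (huv : u ≠ v) (m n : ℕ) :
    geomU u v (m + n) = u ^ m * geomU u v n + v ^ n * geomU u v m := by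
  apply mul_right_cancel₀ (sub_ne_zero.mpr huv)
  rw [geomU_mul, add_mul, mul_assoc, mul_assoc, geomU_mul, geomU_mul]
  ring

theorem geomU_bezout {R : Type*} [CommRing R] [IsDomain R] (u v : R) (huv : u ≠ v) (s : ℕ) :
    ∀ p q : ℕ, p + q ≤ s → Nat.Coprime (p + 1) (q + 1) →
    (Ideal.span {u, v}) ^ (p + q) ≤
      Ideal.span {geomU u v (p + 1)} * (Ideal.span {u, v}) ^ q ⊔
      Ideal.span {geomU u v (q + 1)} * (Ideal.span {u, v}) ^ p := by
  induction s with
  | zero =>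
    intro p q h _
    obtain rfl : p = 0 := by omega
    obtain rfl : q = 0 := by omega
    simp [geomU]
  | succ s ih =>
    -- the case p < q
    have main : ∀ p q : ℕ, p + q ≤ s + 1 → p < q → Nat.Coprime (p + 1) (q + 1) →
        (Ideal.span {u, v}) ^ (p + q) ≤
          Ideal.span {geomU u v (p + 1)} * (Ideal.span {u, v}) ^ q ⊔
          Ideal.span {geomU u v (q + 1)} * (Ideal.span {u, v}) ^ p := by
      intro p q hs hpq hc
      obtain ⟨r, rfl⟩ : ∃ r, q = p + r + 1 := ⟨q - p - 1, by omega⟩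
      have hc' : Nat.Coprime (p + 1) (r + 1) := by
        have : p + r + 1 + 1 = (r + 1) + (p + 1) := by ring
        rw [this] at hc
        simpa using hc
      have h1 := ih p r (by omega) hc'
      set 𝔪 := Ideal.span {u, v} with h𝔪
      have h2 : 𝔪 ^ (2 * p + 1) ≤ Ideal.span {u ^ (p + 1)} * 𝔪 ^ p ⊔
          Ideal.span {v ^ (p + 1)} * 𝔪 ^ p := by
        apply pow_le_of_monomials
        intro i j hij
        by_cases hi : p + 1 ≤ i
        · apply Ideal.mem_sup_left
          have : u ^ i * v ^ j = u ^ (p + 1) * (u ^ (i - (p + 1)) * v ^ j) := by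
            rw [← mul_assoc, ← pow_add]; congr 2; omega
          rw [this]
          exact Ideal.mul_mem_mul (Ideal.mem_span_singleton_self _)
            (monomial_mem u v _ _ _ (by omega))
        · apply Ideal.mem_sup_right
          have : u ^ i * v ^ j = v ^ (p + 1) * (u ^ i * v ^ (j - (p + 1))) := by
            rw [mul_left_comm, ← pow_add]; congr 2; omega
          rw [this]
          exact Ideal.mul_mem_mul (Ideal.mem_span_singleton_self _)
            (monomial_mem u v _ _ _ (by omega))
      have hu : geomU u v (r + 1) * u ^ (p + 1) =
          geomU u v (p + r + 1 + 1) - geomU u v (p + 1) * v ^ (r + 1) := by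
        rw [show p + r + 1 + 1 = (p + 1) + (r + 1) by ring, geomU_add u v huv (p + 1) (r + 1)]; ring
      have hv : geomU u v (r + 1) * v ^ (p + 1) =
          geomU u v (p + r + 1 + 1) - geomU u v (p + 1) * u ^ (r + 1) := by
        rw [show p + r + 1 + 1 = (r + 1) + (p + 1) by ring, geomU_add u v huv (r + 1) (p + 1)]; ring
      have gen : ∀ x y : R, y ∈ 𝔪 → geomU u v (r + 1) * x =
          geomU u v (p + r + 1 + 1) - geomU u v (p + 1) * y ^ (r + 1) →
          Ideal.span {geomU u v (r + 1)} * (Ideal.span {x} * 𝔪 ^ p) ≤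
          Ideal.span {geomU u v (p + 1)} * 𝔪 ^ (p + r + 1) ⊔
          Ideal.span {geomU u v (p + r + 1 + 1)} * 𝔪 ^ p := by
        intro x y hy hxy
        rw [← mul_assoc, Ideal.span_singleton_mul_span_singleton, hxy]
        intro z hz
        obtain ⟨w, hw, rfl⟩ := Ideal.mem_span_singleton_mul.mp hz
        rw [sub_mul, mul_assoc]
        refine Ideal.sub_mem _ (Ideal.mem_sup_right ?_) (Ideal.mem_sup_left ?_)
        · exact Ideal.mul_mem_mul (Ideal.mem_span_singleton_self _) hw
        · refine Ideal.mul_mem_mul (Ideal.mem_span_singleton_self _) ?_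
          rw [show p + r + 1 = (r + 1) + p by ring, pow_add]
          exact Ideal.mul_mem_mul (Ideal.pow_mem_pow hy _) hw
      calc 𝔪 ^ (p + (p + r + 1)) = 𝔪 ^ (p + 1) * 𝔪 ^ (p + r) := by ring
        _ ≤ 𝔪 ^ (p + 1) * (Ideal.span {geomU u v (p + 1)} * 𝔪 ^ r ⊔
              Ideal.span {geomU u v (r + 1)} * 𝔪 ^ p) := Ideal.mul_mono_right h1
        _ = Ideal.span {geomU u v (p + 1)} * 𝔪 ^ (p + r + 1) ⊔
              Ideal.span {geomU u v (r + 1)} * 𝔪 ^ (2 * p + 1) := by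
            rw [Ideal.mul_sup]; congr 1 <;> ring
        _ ≤ _ := by
            refine sup_le le_sup_left ?_
            refine (Ideal.mul_mono_right h2).trans ?_
            rw [Ideal.mul_sup]
            exact sup_le (gen _ v (Ideal.subset_span (by simp)) hu)
              (gen _ u (Ideal.subset_span (by simp)) hv)
    intro p q hs hc
    rcases lt_trichotomy p q with h | h | h
    · exact main p q hs h hc
    · subst h
      have : p = 0 := by simpa using hc
      subst this
      simp [geomU]
    · rw [sup_comm, add_comm p q]
      exact main q p (by omega) h hc.symm

theorem integral_of_large {R : Type*} [CommRing R] [IsDomain R] (x y u v : R) (huv : u ≠ v)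
    (hu0 : u ≠ 0) (I : Ideal R) (α β N a b : ℕ) (hβ : 1 ≤ β) (hN : 1 ≤ N)
    (hgcd : Nat.Coprime β N) (hxy : x - y ∈ I) (h1 : x ^ α * (u ^ β - v ^ β) ∈ I)
    (h2 : u ^ N - v ^ N ∈ I) (ha : α ≤ a) (hb1 : β ≤ b) (hb2 : N ≤ b) :
    IsIntegralOverIdeal I (x ^ a * u ^ b - y ^ a * v ^ b) := by
  obtain ⟨p, rfl⟩ : ∃ p, β = p + 1 := ⟨β - 1, by omega⟩
  obtain ⟨q, rfl⟩ : ∃ q, N = q + 1 := ⟨N - 1, by omega⟩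
  have hbz := geomU_bezout u v huv (p + q) p q le_rfl hgcd
  have hum : u ∈ Ideal.span {u, v} := Ideal.subset_span (by simp)
  have hfg : (Ideal.span {u, v}).FG := Submodule.fg_span (by simp)
  set 𝔪 := Ideal.span {u, v} with h𝔪
  obtain ⟨D, hD⟩ : ∃ D, D = b - 1 := ⟨_, rfl⟩
  refine integral_of_mul_le I (𝔪 ^ D) _ (hfg.pow) ?_ ?_
  · intro h
    have : u ^ D ∈ 𝔪 ^ D := Ideal.pow_mem_pow hum _
    rw [h] at this
    exact pow_ne_zero D hu0 (by simpa using this)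
  intro w hw
  have hU : geomU u v b * w ∈ 𝔪 ^ (D + D) := by
    rw [pow_add]
    exact Ideal.mul_mem_mul (hD ▸ geomU_mem u v b) hw
  have hle : 𝔪 ^ (D + D) ≤ Ideal.span {geomU u v (p + 1)} * 𝔪 ^ D ⊔
      Ideal.span {geomU u v (q + 1)} * 𝔪 ^ D := by
    have : D + D = (D + D - p - q) + (p + q) := by omega
    rw [this, pow_add]
    refine (Ideal.mul_mono_right hbz).trans ?_
    rw [Ideal.mul_sup]
    refine sup_le_sup ?_ ?_
    · rw [mul_left_comm, ← pow_add]
      exact Ideal.mul_mono_right (Ideal.pow_le_pow_right (by omega))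
    · rw [mul_left_comm, ← pow_add]
      exact Ideal.mul_mono_right (Ideal.pow_le_pow_right (by omega))
  obtain ⟨z1, hz1, z2, hz2, hz⟩ := Submodule.mem_sup.mp (hle hU)
  obtain ⟨w1, hw1, rfl⟩ := Ideal.mem_span_singleton_mul.mp hz1
  obtain ⟨w2, hw2, rfl⟩ := Ideal.mem_span_singleton_mul.mp hz2
  obtain ⟨c, rfl⟩ := Nat.exists_eq_add_of_le ha
  have e : (x ^ (α + c) * u ^ b - y ^ (α + c) * v ^ b) * w =
      x ^ c * ((x ^ α * (u ^ (p + 1) - v ^ (p + 1))) * w1) +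
      x ^ (α + c) * ((u ^ (q + 1) - v ^ (q + 1)) * w2) +
      v ^ b * ((x ^ (α + c) - y ^ (α + c)) * w) := by
    have e1 : (x ^ (α + c) * u ^ b - y ^ (α + c) * v ^ b) * w =
      x ^ (α + c) * (u - v) * (geomU u v b * w) + v ^ b * ((x ^ (α + c) - y ^ (α + c)) * w) := by
      linear_combination (-x ^ (α + c) * w) * geomU_mul u v b
    rw [e1, ← hz, ← geomU_mul u v (p + 1), ← geomU_mul u v (q + 1)]
    ring
  have hxa : x ^ (α + c) - y ^ (α + c) ∈ I :=
    Ideal.mem_of_dvd I (sub_dvd_pow_sub_pow x y _) hxy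
  rw [e]
  refine Ideal.add_mem _ (Ideal.add_mem _ ?_ ?_) ?_
  · exact Ideal.mul_mem_left _ _ (Ideal.mul_mem_mul h1 hw1)
  · exact Ideal.mul_mem_left _ _ (Ideal.mul_mem_mul h2 hw2)
  · exact Ideal.mul_mem_left _ _ (Ideal.mul_mem_mul hxa hw)

theorem integral_of_mem {R : Type*} [CommRing R] (I : Ideal R) (f : R) (h : f ∈ I) :
    IsIntegralOverIdeal I f :=
  ⟨1, one_pos, fun _ => -f, fun j h1 h2 => by
    obtain rfl : j = 1 := by omega
    simpa using h, by simp⟩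

theorem integral_order {R : Type*} [CommRing R] (φ : R →+* PowerSeries ℂ) (I : Ideal R) (f : R)
    (K n : ℕ) (c : ℂ) (hc : c ≠ 0) (hf : φ f = PowerSeries.C c * PowerSeries.X ^ n)
    (hI : I ≤ Ideal.comap φ (Ideal.span {PowerSeries.X ^ K}))
    (h : IsIntegralOverIdeal I f) : K ≤ n := by
  obtain ⟨m, hm, a, ha, he⟩ := h
  by_contra hlt
  push Not at hlt
  have h1 : (PowerSeries.X : PowerSeries ℂ) ^ (n * m + 1) ∣ φ (f ^ m) := by
    rw [eq_neg_of_add_eq_zero_left he, map_neg, dvd_neg, map_sum]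
    refine Finset.dvd_sum fun j hj => ?_
    obtain ⟨hj1, hj2⟩ := Finset.mem_Icc.mp hj
    have h2 : φ (a j) ∈ (Ideal.span {(PowerSeries.X : PowerSeries ℂ) ^ K}) ^ j := by
      have := (Ideal.pow_right_mono hI j).trans (Ideal.le_comap_pow φ j) (ha j hj1 hj2)
      exact this
    rw [Ideal.span_singleton_pow, Ideal.mem_span_singleton, ← pow_mul] at h2
    rw [map_mul, map_pow, hf, mul_pow, ← pow_mul]
    have h3 := mul_dvd_mul h2 (Dvd.intro_left (PowerSeries.C c ^ (m - j))
      (rfl : _ = PowerSeries.C c ^ (m - j) * (PowerSeries.X : PowerSeries ℂ) ^ (n * (m - j))))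
    rw [← pow_add] at h3
    refine (pow_dvd_pow _ ?_).trans h3
    obtain ⟨d, rfl⟩ := Nat.exists_eq_add_of_le hj2
    rw [Nat.add_sub_cancel_left]
    nlinarith
  rw [map_pow, hf, mul_pow, ← pow_mul, ← map_pow, PowerSeries.X_pow_dvd_iff] at h1
  have := h1 (n * m) (by omega)
  rw [PowerSeries.coeff_C_mul, PowerSeries.coeff_X_pow_self, mul_one] at this
  exact pow_ne_zero m hc this

open MvPowerSeries in
theorem arc_test (α β N a b : ℕ)
    (h : IsIntegralOverIdeal (Ideal.span {X 0 - X 2, X 0 ^ α * X 1 ^ β - X 2 ^ α * X 3 ^ β,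
      X 1 ^ N - X 3 ^ N}) (X 0 ^ a * X 1 ^ b - X 2 ^ a * X 3 ^ b : MvPowerSeries (Fin 4) ℂ))
    (ζ : ℂ) (p q K : ℕ) (hp : 1 ≤ p) (hq : 1 ≤ q) (hζ : ζ ^ b ≠ 1)
    (h1 : ζ ^ β = 1 ∨ K ≤ p * α + q * β) (h2 : ζ ^ N = 1 ∨ K ≤ q * N) : K ≤ p * a + q * b := by
  let T : PowerSeries ℂ := PowerSeries.X
  let s : Fin 4 → MvPowerSeries Unit ℂ :=
    ![T ^ p, PowerSeries.C ζ * T ^ q, T ^ p, T ^ q]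
  have hs : HasSubst s := by
    apply hasSubst_of_constantCoeff_zero
    have hp0 : p ≠ 0 := by omega
    have hq0 : q ≠ 0 := by omega
    have hT : constantCoeff (T : MvPowerSeries Unit ℂ) = 0 := PowerSeries.constantCoeff_X
    have e1 : ∀ k ≠ 0, constantCoeff (T ^ k : MvPowerSeries Unit ℂ) = 0 := by
      intro k hk
      rw [map_pow, hT, zero_pow hk]
    intro i
    fin_cases i
    · exact e1 p hp0
    · exact (map_mul constantCoeff _ _).trans (by rw [e1 q hq0, mul_zero])
    · exact e1 p hp0
    · exact e1 q hq0
  let φ : MvPowerSeries (Fin 4) ℂ →+* PowerSeries ℂ := (substAlgHom (R := ℂ) hs).toRingHom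
  have φ0 : φ (X 0) = T ^ p := substAlgHom_X hs 0
  have φ1 : φ (X 1) = PowerSeries.C ζ * T ^ q := substAlgHom_X hs 1
  have φ2 : φ (X 2) = T ^ p := substAlgHom_X hs 2
  have φ3 : φ (X 3) = T ^ q := substAlgHom_X hs 3
  have gen : ∀ c d : ℕ, φ (X 0 ^ c * X 1 ^ d - X 2 ^ c * X 3 ^ d) =
      PowerSeries.C (ζ ^ d - 1) * T ^ (p * c + q * d) := by
    intro c d
    simp only [map_sub, map_mul, map_pow, φ0, φ1, φ2, φ3, map_one]
    ring
  refine integral_order φ _ _ K _ (ζ ^ b - 1) (sub_ne_zero.mpr hζ) (gen a b) ?_ h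
  rw [Ideal.span_le]
  rintro z (rfl | rfl | rfl)
  · simp [φ0, φ2]
  · rw [SetLike.mem_coe, Ideal.mem_comap]
    rw [gen, Ideal.mem_span_singleton]
    rcases h1 with h1 | h1
    · simp [h1]
    · exact (pow_dvd_pow _ h1).mul_left _
  · rw [SetLike.mem_coe, Ideal.mem_comap]
    have := gen 0 N
    simp only [pow_zero, one_mul, mul_zero, zero_add] at this
    rw [this, Ideal.mem_span_singleton]
    rcases h2 with h2 | h2
    · simp [h2]
    · exact (pow_dvd_pow _ h2).mul_left _

open MvPowerSeries in
/-- Computation of the Lipschitz saturation of the toric hypersurface `y^N - x^{αN} z^β = 0`: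
in `ℂ[[x_1,x_2,y_1,y_2]]` (variables `x_1 = X 0`, `x_2 = X 1`, `y_1 = X 2`, `y_2 = X 3`) with
`I_Δ = ⟨x_1 - y_1, x_1^α x_2^β - y_1^α y_2^β, x_2^N - y_2^N⟩` and
`T^s = min(N,β)·ℕ ∪ [max(N,β), ∞)`, the element `x_1^a x_2^b - y_1^a y_2^b` is integral over
`I_Δ` if and only if `N ∣ b`, or `a ≥ α` and `b ∈ T^s`. -/
theorem saturation_of_toric_hypersurface (α β N : ℕ)
    (hα : 1 ≤ α) (hβ : 1 ≤ β) (hN : 2 ≤ N) (hgcd : Nat.gcd β N = 1)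
    (IΔ : Ideal (MvPowerSeries (Fin 4) ℂ))
    (hIΔ : IΔ = Ideal.span {X 0 - X 2, X 0 ^ α * X 1 ^ β - X 2 ^ α * X 3 ^ β,
      X 1 ^ N - X 3 ^ N})
    (Ts : Set ℕ)
    (hTs : Ts = {n | ∃ m : ℕ, n = m * min N β} ∪ {n | max N β ≤ n}) :
    ∀ a b : ℕ,
      IsIntegralOverIdeal IΔ (X 0 ^ a * X 1 ^ b - X 2 ^ a * X 3 ^ b) ↔
        (N ∣ b ∨ (α ≤ a ∧ b ∈ Ts)) := by
  subst hIΔ hTs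
  intro a b
  constructor
  · intro h
    by_cases hb : N ∣ b
    · exact Or.inl hb
    right
    have hN1 := Complex.isPrimitiveRoot_exp N (by omega)
    have hβ1 := Complex.isPrimitiveRoot_exp β (by omega)
    set ζ := Complex.exp (2 * Real.pi * Complex.I / N)
    set ξ := Complex.exp (2 * Real.pi * Complex.I / β)
    have hζ : ζ ^ b ≠ 1 := fun h => hb ((hN1.pow_eq_one_iff_dvd b).mp h)
    have t := fun p q hp hq => arc_test α β N a b h ζ p q (p * α + q * β) hp hq hζ
      (Or.inr le_rfl) (Or.inl hN1.pow_eq_one)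
    have haα : α ≤ a := by
      by_contra hlt
      push Not at hlt
      have := t (b + 1) 1 (by omega) le_rfl
      nlinarith
    have hbβ : β ≤ b := by
      by_contra hlt
      push Not at hlt
      have := t 1 (a + 1) le_rfl (by omega)
      nlinarith
    refine ⟨haα, ?_⟩
    by_cases hd : β ∣ b
    · rcases le_total N β with hNβ | hNβ
      · right
        simp [hNβ, hbβ]
      · left
        obtain ⟨m, rfl⟩ := hd
        exact ⟨m, by rw [min_eq_right hNβ, mul_comm]⟩
    · right
      have hξ : ξ ^ b ≠ 1 := fun h => hd ((hβ1.pow_eq_one_iff_dvd b).mp h)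
      have := arc_test α β N a b h ξ 1 (a + 1) ((a + 1) * N) le_rfl (by omega) hξ
        (Or.inl hβ1.pow_eq_one) (Or.inr le_rfl)
      have hNb : N ≤ b := by
        by_contra hlt
        push Not at hlt
        nlinarith
      exact max_le hNb hbβ
  · intro h
    set I : Ideal (MvPowerSeries (Fin 4) ℂ) := Ideal.span {X 0 - X 2,
      X 0 ^ α * X 1 ^ β - X 2 ^ α * X 3 ^ β, X 1 ^ N - X 3 ^ N} with hI
    have g1 : (X 0 - X 2 : MvPowerSeries (Fin 4) ℂ) ∈ I := Ideal.subset_span (by simp)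
    have g2 : (X 0 ^ α * X 1 ^ β - X 2 ^ α * X 3 ^ β : MvPowerSeries (Fin 4) ℂ) ∈ I :=
      Ideal.subset_span (by simp)
    have g3 : (X 1 ^ N - X 3 ^ N : MvPowerSeries (Fin 4) ℂ) ∈ I := Ideal.subset_span (by simp)
    have gp : ∀ c, (X 0 ^ c - X 2 ^ c : MvPowerSeries (Fin 4) ℂ) ∈ I := fun c =>
      Ideal.mem_of_dvd I (sub_dvd_pow_sub_pow _ _ c) g1
    have g2' : (X 0 ^ α * (X 1 ^ β - X 3 ^ β) : MvPowerSeries (Fin 4) ℂ) ∈ I := by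
      have := Ideal.sub_mem I g2 (Ideal.mul_mem_right (X 3 ^ β) I (gp α))
      convert this using 1
      ring
    have fin : ∀ a b : ℕ, (X 0 ^ a * (X 1 ^ b - X 3 ^ b) : MvPowerSeries (Fin 4) ℂ) ∈ I →
        IsIntegralOverIdeal I (X 0 ^ a * X 1 ^ b - X 2 ^ a * X 3 ^ b) := by
      intro a b hab
      apply integral_of_mem
      have := Ideal.add_mem I hab (Ideal.mul_mem_right (X 3 ^ b) I (gp a))
      convert this using 1
      ring
    have caseN : ∀ a b : ℕ, N ∣ b →
        IsIntegralOverIdeal I (X 0 ^ a * X 1 ^ b - X 2 ^ a * X 3 ^ b) := by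
      rintro a _ ⟨k, rfl⟩
      apply fin
      apply Ideal.mul_mem_left
      rw [pow_mul, pow_mul]
      exact Ideal.mem_of_dvd I (sub_dvd_pow_sub_pow _ _ k) g3
    rcases h with h | ⟨ha, ⟨m, hm⟩ | hb⟩
    · exact caseN a b h
    · rcases le_total N β with hNβ | hNβ
      · rw [min_eq_left hNβ] at hm
        exact caseN a b ⟨m, by rw [hm, mul_comm]⟩
      · rw [min_eq_right hNβ, mul_comm] at hm
        subst hm
        apply fin
        obtain ⟨c, rfl⟩ := Nat.exists_eq_add_of_le ha
        rw [pow_add, mul_comm (X 0 ^ α), mul_assoc]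
        apply Ideal.mul_mem_left
        refine Ideal.mem_of_dvd I (mul_dvd_mul_left _ ?_) g2'
        rw [pow_mul, pow_mul]
        exact sub_dvd_pow_sub_pow _ _ m
    · have hb' : max N β ≤ b := hb
      have hX : (X 1 : MvPowerSeries (Fin 4) ℂ) ≠ X 3 := by
        intro h
        have := MvPowerSeries.X_inj.mp h
        simp at this
      have hX0 : (X 1 : MvPowerSeries (Fin 4) ℂ) ≠ 0 := by
        intro h
        have := congrArg (coeff (Finsupp.single 1 1)) h
        simp [coeff_X] at this
      have : IsDomain (MvPowerSeries (Fin 4) ℂ) := NoZeroDivisors.to_isDomain _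
      exact integral_of_large _ _ _ _ hX hX0 I α β N a b hβ (by omega) hgcd g1 g2' g3 ha
        ((le_max_right _ _).trans hb') ((le_max_left _ _).trans hb')
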